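/- Let h > 0, b_0 > 0, and let u_0 ∈ W^{1,∞}(0,∞) satisfy u_0 ≥ 0, u_0(0) > 0, and u_0 = 0 on [b_0, ∞). Let (W, b) be the classical solution of problem (2.1) with data (h, u_0, b_0), and let (W^∞, b^∞) be the unique steady state of (2.1), i.e. b^∞ = ω is the unique positive root of h = (x/2)·e^{x²/4} and W^∞(η) = h·∫_η^ω e^{−s²/4} ds. Then: (a) b(τ) → b^∞ as τ → ∞; (b) W(·, τ) converges to W^∞ uniformly on [0, β] for every β ∈ (0, b^∞) as τ → ∞; (c) the extension W̃(η, τ), equal to W(η, τ) for η ∈ [0, b(τ)] and 0 for η > b(τ), converges as τ → ∞, uniformly on compact subsets of [0, ∞), to the extension W̃^∞ equal to W^∞ on [0, b^∞] and 0 on (b^∞, ∞). -/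

import Mathlib

/-- `(W, b)` is a classical solution of problem (2.1) with flux `h` and
initial data `(u0, b0)`. -/
def IsClassicalSol21 (h b0 : ℝ) (u0 : ℝ → ℝ) (W : ℝ → ℝ → ℝ) (b : ℝ → ℝ) : Prop :=
  ContDiffOn ℝ 1 b (Set.Ici 0) ∧ b 0 = b0 ∧
  ContinuousOn (fun p : ℝ × ℝ => W p.1 p.2)
    {p : ℝ × ℝ | 0 ≤ p.2 ∧ 0 ≤ p.1 ∧ p.1 ≤ b p.2} ∧
  ContinuousOn (fun p : ℝ × ℝ => deriv (fun y => W y p.2) p.1)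
    {p : ℝ × ℝ | 0 < p.2 ∧ 0 ≤ p.1 ∧ p.1 ≤ b p.2} ∧
  (∀ τ > (0:ℝ), ∀ η, 0 < η → η < b τ →
    DifferentiableAt ℝ (fun σ => W η σ) τ ∧
    DifferentiableAt ℝ (fun y => W y τ) η ∧
    DifferentiableAt ℝ (deriv (fun y => W y τ)) η ∧
    deriv (fun σ => W η σ) τ - deriv (deriv (fun y => W y τ)) η
      - η / 2 * deriv (fun y => W y τ) η = 0) ∧
  (∀ τ > (0:ℝ), -deriv (fun y => W y τ) 0 = h) ∧
  (∀ τ > (0:ℝ), W (b τ) τ = 0) ∧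
  (∀ τ > (0:ℝ), deriv b τ + b τ / 2 = -deriv (fun y => W y τ) (b τ)) ∧
  (∀ η, 0 < η → η < b0 → W η 0 = u0 η)

open Set Filter Topology in
lemma aux_left {g : ℝ → ℝ} {g' t : ℝ} (hg : HasDerivWithinAt g g' (Iic t) t) (h0 : g t = 0)
    (hp : ∀ᶠ x in 𝓝[<] t, 0 ≤ g x) : g' ≤ 0 := by
  have h1 : HasDerivWithinAt g g' (Iio t) t := hg.mono Iio_subset_Iic_self
  rw [hasDerivWithinAt_iff_tendsto_slope' (by simp)] at h1
  refine le_of_tendsto h1 ?_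
  filter_upwards [hp, self_mem_nhdsWithin] with x hx hxt
  rw [slope_def_field, h0]
  have : x < t := hxt
  have h2 : t - x > 0 := by linarith
  rw [← neg_div_neg_eq]
  apply div_nonpos_of_nonpos_of_nonneg <;> linarith

open Set Filter Topology in
lemma aux_right {g : ℝ → ℝ} {g' t : ℝ} (hg : HasDerivAt g g' t) (h0 : g t = 0)
    (hp : ∀ᶠ x in 𝓝[>] t, 0 ≤ g x) : 0 ≤ g' := by
  have h1 : HasDerivWithinAt g g' (Ioi t) t := hg.hasDerivWithinAt
  rw [hasDerivWithinAt_iff_tendsto_slope' (by simp)] at h1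
  refine ge_of_tendsto h1 ?_
  filter_upwards [hp, self_mem_nhdsWithin] with x hx hxt
  rw [slope_def_field, h0]
  have : t < x := hxt
  apply div_nonneg <;> linarith

open Set Filter Topology in
lemma aux_second {g : ℝ → ℝ} {x : ℝ} (hm : IsLocalMin g x) (hc : ContinuousAt g x) :
    0 ≤ deriv (deriv g) x := by
  by_contra hn
  push Not at hn
  have hM := isLocalMax_of_deriv_deriv_neg hn hm.deriv_eq_zero hc
  have : g =ᶠ[𝓝 x] fun _ => g x := by
    filter_upwards [hm, hM] with y h1 h2
    exact le_antisymm h2 h1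
  have h2 := this.deriv.deriv_eq
  simp at h2
  linarith

open Set Filter Topology in
lemma aux_bpos {h b0 : ℝ} {u0 : ℝ → ℝ} {W : ℝ → ℝ → ℝ} {b : ℝ → ℝ} (hh : 0 < h) (hb0 : 0 < b0)
    (hsol : IsClassicalSol21 h b0 u0 W b) : ∀ τ, 0 ≤ τ → 0 < b τ := by
  obtain ⟨hb, hbz, hW, hWd, hpde, hfl, hfb0, hfb, hini⟩ := hsol
  by_contra hcon
  push Not at hcon
  obtain ⟨T, hT, hbT⟩ := hcon
  have hcb : ContinuousOn b (Ici 0) := hb.continuousOn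
  set K := Icc 0 T ∩ b ⁻¹' (Iic 0) with hK
  have hKc : IsCompact K := by
    have : IsClosed K := (hcb.mono Icc_subset_Ici_self).preimage_isClosed_of_isClosed isClosed_Icc isClosed_Iic
    exact isCompact_Icc.of_isClosed_subset this inter_subset_left
  obtain ⟨t, ht, hmin⟩ := hKc.exists_isLeast ⟨T, ⟨hT, le_refl _⟩, hbT⟩
  have ht0 : 0 < t := by
    rcases ht.1.1.eq_or_lt with h1 | h1
    · have := ht.2
      simp only [mem_preimage, mem_Iic, ← h1, hbz] at this
      linarith
    · exact h1
  have hpre : ∀ x, 0 ≤ x → x < t → 0 < b x := by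
    intro x hx hxt
    by_contra hc
    have := hmin (show x ∈ K from ⟨⟨hx, hxt.le.trans ht.1.2⟩, by simpa using hc⟩)
    linarith
  have hcA : ContinuousAt b t := hcb.continuousAt (Ici_mem_nhds ht0)
  have hev : ∀ᶠ x in 𝓝[<] t, 0 ≤ b x := by
    filter_upwards [self_mem_nhdsWithin, nhdsWithin_le_nhds (Ioi_mem_nhds ht0)] with x h1 h2
    exact (hpre x (le_of_lt h2) h1).le
  have hbt : b t = 0 := by
    apply le_antisymm ht.2
    exact ge_of_tendsto (hcA.tendsto.mono_left nhdsWithin_le_nhds) hev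
  have hd : HasDerivAt b (deriv b t) t :=
    ((hb.differentiableOn (by norm_num)).differentiableAt (Ici_mem_nhds ht0)).hasDerivAt
  have h1 := aux_left hd.hasDerivWithinAt hbt hev
  have h2 := hfb t ht0
  have h3 := hfl t ht0
  rw [hbt] at h2
  linarith

open Set Filter Topology in
lemma aux_comparison {h b0 : ℝ} {u0 : ℝ → ℝ} {W : ℝ → ℝ → ℝ} {b : ℝ → ℝ} (hh : 0 < h)
    (hb0 : 0 < b0)
    (hsol : IsClassicalSol21 h b0 u0 W b) (s : ℝ) (hs : s * s = 1)
    (A A' f f1 f2 : ℝ → ℝ)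
    (hA : ∀ t, HasDerivAt A (A' t) t)
    (hf : ∀ x, HasDerivAt f (f1 x) x)
    (hf1 : ∀ x, HasDerivAt f1 (f2 x) x)
    (hint : ∀ t > 0, ∀ x, 0 < x → x < b t → 0 < s * (A' t + f2 x + x / 2 * f1 x))
    (hflux : 0 < s * (f1 0 - h))
    (hfree : ∀ t > 0, A t = f (b t) →
      0 < f1 (b t) ∧ 0 < s * (A' t + f1 (b t) * (b t / 2 - f1 (b t))))
    (hinit : ∀ x, 0 ≤ x → x ≤ b0 → 0 < s * (A 0 - f x - W x 0)) :
    ∀ t, 0 ≤ t → ∀ x, 0 ≤ x → x ≤ b t → 0 < s * (A t - f x - W x t) := by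
  have hbpos := aux_bpos hh hb0 hsol
  obtain ⟨hb, hbz, hW, hWd, hpde, hfl, hfb0, hfb, hini⟩ := hsol
  have hcb : ContinuousOn b (Ici 0) := hb.continuousOn
  have hcA : Continuous A := continuous_iff_continuousAt.2 fun t => (hA t).continuousAt
  have hcf : Continuous f := continuous_iff_continuousAt.2 fun t => (hf t).continuousAt
  by_contra hcon
  push Not at hcon
  obtain ⟨T, hT, x0, hx0, hx0b, hx0n⟩ := hcon
  -- reparametrised function
  set F : ℝ × ℝ → ℝ := fun p => s * (A p.2 - f (p.1 * b p.2) - W (p.1 * b p.2) p.2) with hF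
  have hFc : ContinuousOn F (Icc 0 1 ×ˢ Ici 0) := by
    have hb2 : ContinuousOn (fun p : ℝ × ℝ => b p.2) (Icc 0 1 ×ˢ Ici 0) :=
      hcb.comp continuousOn_snd (fun p hp => hp.2)
    have hm : ContinuousOn (fun p : ℝ × ℝ => p.1 * b p.2) (Icc 0 1 ×ˢ Ici 0) :=
      continuousOn_fst.mul hb2
    have hW2 : ContinuousOn (fun p : ℝ × ℝ => W (p.1 * b p.2) p.2) (Icc 0 1 ×ˢ Ici 0) := by
      refine hW.comp (f := fun p : ℝ × ℝ => (p.1 * b p.2, p.2)) (hm.prodMk continuousOn_snd) ?_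
      rintro ⟨y, t⟩ ⟨⟨hy0, hy1⟩, ht⟩
      simp only at hy0 hy1
      have hbt := hbpos t ht
      exact ⟨ht, mul_nonneg hy0 hbt.le, by simp only; nlinarith⟩
    exact continuousOn_const.mul (((hcA.comp_continuousOn continuousOn_snd).sub
      (hcf.comp_continuousOn hm)).sub hW2)
  set K := (Icc (0:ℝ) 1 ×ˢ Icc 0 T) ∩ F ⁻¹' (Iic 0) with hK
  have hKc : IsCompact K := by
    have : IsClosed K := (hFc.mono (prod_mono_right Icc_subset_Ici_self)).preimage_isClosed_of_isClosed
      (isClosed_Icc.prod isClosed_Icc) isClosed_Iic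
    exact (isCompact_Icc.prod isCompact_Icc).of_isClosed_subset this inter_subset_left
  have hKne : (Prod.snd '' K).Nonempty := by
    have hbT := hbpos T hT
    refine ⟨T, (x0 / b T, T), ⟨⟨⟨by positivity, ?_⟩, hT, le_refl _⟩, ?_⟩, rfl⟩
    · exact (div_le_one hbT).2 hx0b
    · simp only [hF, mem_preimage, mem_Iic, div_mul_cancel₀ _ hbT.ne']
      exact hx0n
  obtain ⟨t0, ⟨⟨y, t⟩, hyK, htt⟩, hmin⟩ := (hKc.image continuous_snd).exists_isLeast hKne
  simp only at htt
  subst htt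
  obtain ⟨⟨⟨hy0, hy1⟩, ht0, htT⟩, hFy⟩ := hyK
  simp only at hy0 hy1 ht0 htT
  have htpos : 0 < t := by
    rcases ht0.eq_or_lt with h1 | h1
    · exfalso
      have h2 : F (y, t) ≤ 0 := hFy
      simp only [hF, ← h1, hbz] at h2
      have := hinit (y * b0) (by positivity) (by nlinarith)
      linarith
    · exact h1
  have hbt := hbpos t ht0
  have hpre : ∀ z, 0 ≤ z → z ≤ 1 → ∀ r, 0 ≤ r → r < t → 0 < F (z, r) := by
    intro z hz0 hz1 r hr hrt
    by_contra hc
    have := hmin ⟨(z, r), ⟨⟨⟨hz0, hz1⟩, hr, hrt.le.trans htT⟩, by simpa using hc⟩, rfl⟩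
    simp only at this
    linarith
  have hpreZ : ∀ r, 0 ≤ r → r < t → ∀ x, 0 ≤ x → x ≤ b r → 0 < s * (A r - f x - W x r) := by
    intro r hr hrt x hx hxb
    have hbr := hbpos r hr
    have := hpre (x / b r) (by positivity) ((div_le_one hbr).2 hxb) r hr hrt
    simpa only [hF, div_mul_cancel₀ _ hbr.ne'] using this
  have hlt : ∀ᶠ r in 𝓝[<] t, 0 ≤ r ∧ r < t := by
    filter_upwards [self_mem_nhdsWithin, nhdsWithin_le_nhds (Ioi_mem_nhds htpos)] with r h1 h2
    exact ⟨le_of_lt h2, h1⟩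
  have hFt : ∀ z, 0 ≤ z → z ≤ 1 → 0 ≤ F (z, t) := by
    intro z hz0 hz1
    have hc : ContinuousOn (fun r => F (z, r)) (Ici 0) :=
      hFc.comp (f := fun r : ℝ => (z, r)) (by fun_prop) (fun r hr => ⟨⟨hz0, hz1⟩, hr⟩)
    have hc2 := (hc.continuousAt (Ici_mem_nhds htpos)).tendsto.mono_left
      (nhdsWithin_le_nhds (s := Iio t))
    refine ge_of_tendsto hc2 ?_
    filter_upwards [hlt] with r hr
    exact (hpre z hz0 hz1 r hr.1 hr.2).le
  have hZt : ∀ x, 0 ≤ x → x ≤ b t → 0 ≤ s * (A t - f x - W x t) := by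
    intro x hx hxb
    have := hFt (x / b t) (by positivity) ((div_le_one hbt).2 hxb)
    simpa only [hF, div_mul_cancel₀ _ hbt.ne'] using this
  obtain ⟨x, hx0, hxb, hZx⟩ : ∃ x, 0 ≤ x ∧ x ≤ b t ∧ s * (A t - f x - W x t) = 0 :=
    ⟨y * b t, by positivity, by nlinarith, le_antisymm hFy (hFt y hy0 hy1)⟩
  have hs0 : s ≠ 0 := by rintro rfl; simp at hs
  have hcbt : ContinuousAt b t := hcb.continuousAt (Ici_mem_nhds htpos)
  rcases hx0.eq_or_lt with hx | hxpos
  · -- touching at the fixed boundary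
    subst hx
    have hdW : HasDerivAt (fun y => W y t) (-h) 0 := by
      have h1 := hfl t htpos
      have h2 : deriv (fun y => W y t) 0 = -h := by linarith
      rw [← h2]
      apply DifferentiableAt.hasDerivAt
      by_contra hnd
      rw [deriv_zero_of_not_differentiableAt hnd] at h2
      linarith
    have hdZ : HasDerivAt (fun x => s * (A t - f x - W x t)) (s * (0 - f1 0 - -h)) 0 :=
      (((hasDerivAt_const (0:ℝ) (A t)).sub (hf 0)).sub hdW).const_mul s
    have := aux_right hdZ hZx (by
      filter_upwards [self_mem_nhdsWithin, nhdsWithin_le_nhds (Iio_mem_nhds hbt)] with x h1 h2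
      exact hZt x (le_of_lt h1) (le_of_lt h2))
    nlinarith
  rcases hxb.eq_or_lt with hx | hxlt
  · -- touching at the free boundary
    subst hx
    rw [hfb0 t htpos] at hZx
    have hAf : A t = f (b t) := by
      rcases mul_eq_zero.1 hZx with h1 | h1
      · exact absurd h1 hs0
      · linarith
    obtain ⟨hf1p, hfr⟩ := hfree t htpos hAf
    have hd : HasDerivAt b (deriv b t) t :=
      ((hb.differentiableOn (by norm_num)).differentiableAt (Ici_mem_nhds htpos)).hasDerivAt
    have hdg : HasDerivAt (fun r => s * (A r - f (b r))) (s * (A' t - f1 (b t) * deriv b t)) t :=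
      ((hA t).sub ((hf (b t)).comp t hd)).const_mul s
    have h1 := aux_left hdg.hasDerivWithinAt (by simp [hAf]) (by
      filter_upwards [hlt, nhdsWithin_le_nhds (Ioi_mem_nhds htpos)] with r hr hr2
      have h3 := hpreZ r hr.1 hr.2 (b r) (hbpos r hr.1).le le_rfl
      rw [hfb0 r hr2] at h3
      simpa using h3.le)
    have hdW : HasDerivWithinAt (fun y => W y t) (deriv (fun y => W y t) (b t)) (Iic (b t)) (b t) := by
      refine hasDerivWithinAt_Iic_of_tendsto_deriv (s := Ioo 0 (b t)) ?_ ?_ ?_ ?_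
      · intro z hz
        exact (hpde t htpos z hz.1 hz.2).2.1.differentiableWithinAt
      · have : ContinuousOn (fun y => W y t) (Icc 0 (b t)) :=
          hW.comp (f := fun y : ℝ => (y, t)) (by fun_prop) (fun z hz => ⟨ht0, hz.1, hz.2⟩)
        exact (this (b t) ⟨hbt.le, le_rfl⟩).mono Ioo_subset_Icc_self
      · exact Ioo_mem_nhdsLT hbt
      · have : ContinuousOn (deriv (fun y => W y t)) (Icc 0 (b t)) :=
          hWd.comp (f := fun y : ℝ => (y, t)) (by fun_prop) (fun z hz => ⟨htpos, hz.1, hz.2⟩)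
        have h3 := (this (b t) ⟨hbt.le, le_rfl⟩).tendsto
        refine h3.mono_left ?_
        rw [← nhdsWithin_Ioo_eq_nhdsLT hbt]
        exact nhdsWithin_mono _ Ioo_subset_Icc_self
    have hdZ : HasDerivWithinAt (fun x => s * (A t - f x - W x t))
        (s * (0 - f1 (b t) - deriv (fun y => W y t) (b t))) (Iic (b t)) (b t) :=
      (((hasDerivAt_const (b t) (A t)).sub (hf (b t))).hasDerivWithinAt.sub hdW).const_mul s
    have h2 := aux_left hdZ (by rw [hfb0 t htpos]; exact hZx) (by
      filter_upwards [self_mem_nhdsWithin, nhdsWithin_le_nhds (Ioi_mem_nhds hbt)] with x h1 h2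
      exact hZt x (le_of_lt h2) (le_of_lt h1))
    have h3 := hfb t htpos
    have h4 : deriv (fun y => W y t) (b t) = -(deriv b t) - b t / 2 := by linarith
    rw [h4] at h2
    nlinarith [mul_nonpos_of_nonneg_of_nonpos hf1p.le h2]
  · -- interior touching
    obtain ⟨hd1, hd2, hd3, heq⟩ := hpde t htpos x hxpos hxlt
    have hi := hint t htpos x hxpos hxlt
    have hdt : HasDerivAt (fun r => s * (A r - f x - W x r))
        (s * (A' t - deriv (fun σ => W x σ) t)) t :=
      (((hA t).sub_const (f x)).sub hd1.hasDerivAt).const_mul s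
    have h1 := aux_left hdt.hasDerivWithinAt hZx (by
      filter_upwards [hlt, nhdsWithin_le_nhds (hcbt.eventually (Ioi_mem_nhds hxlt))] with r hr hr2
      exact (hpreZ r hr.1 hr.2 x hxpos.le (le_of_lt hr2)).le)
    have hdx : ∀ z, 0 < z → z < b t → HasDerivAt (fun x => s * (A t - f x - W x t))
        (s * (0 - f1 z - deriv (fun y => W y t) z)) z := fun z hz1 hz2 =>
      (((hasDerivAt_const z (A t)).sub (hf z)).sub
        (hpde t htpos z hz1 hz2).2.1.hasDerivAt).const_mul s
    have hnear : ∀ᶠ z in 𝓝 x, 0 < z ∧ z < b t := by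
      filter_upwards [Ioo_mem_nhds hxpos hxlt] with z hz using hz
    have hloc : IsLocalMin (fun x => s * (A t - f x - W x t)) x := by
      filter_upwards [hnear] with z hz
      rw [hZx]
      exact hZt z hz.1.le hz.2.le
    have h2 := hloc.hasDerivAt_eq_zero (hdx x hxpos hxlt)
    have h3 := aux_second hloc (hdx x hxpos hxlt).continuousAt
    have hder : deriv (fun x => s * (A t - f x - W x t)) =ᶠ[𝓝 x]
        fun z => s * (0 - f1 z - deriv (fun y => W y t) z) := by
      filter_upwards [hnear] with z hz
      exact (hdx z hz.1 hz.2).deriv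
    have hdd : HasDerivAt (fun z => s * (0 - f1 z - deriv (fun y => W y t) z))
        (s * (0 - f2 x - deriv (deriv (fun y => W y t)) x)) x :=
      (((hasDerivAt_const x (0:ℝ)).sub (hf1 x)).sub hd3.hasDerivAt).const_mul s
    rw [hder.deriv_eq, hdd.deriv] at h3
    have h4 : deriv (fun y => W y t) x = - f1 x := by
      rcases mul_eq_zero.1 h2 with h1 | h1
      · exact absurd h1 hs0
      · linarith
    rw [h4] at heq
    have h5 : deriv (deriv (fun y => W y t)) x = deriv (fun σ => W x σ) t + x / 2 * f1 x := by
      linarith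
    rw [h5] at h3
    nlinarith

noncomputable def auxG (x : ℝ) : ℝ := ∫ s in (0:ℝ)..x, Real.exp (-s ^ 2 / 4)

lemma auxG_cont : Continuous (fun s : ℝ => Real.exp (-s ^ 2 / 4)) := by fun_prop

lemma auxG_deriv (x : ℝ) : HasDerivAt auxG (Real.exp (-x ^ 2 / 4)) x :=
  intervalIntegral.integral_hasDerivAt_right (auxG_cont.intervalIntegrable _ _)
    (auxG_cont.stronglyMeasurableAtFilter _ _) auxG_cont.continuousAt

lemma auxG_zero : auxG 0 = 0 := by simp [auxG]

lemma auxG_strictMono : StrictMono auxG :=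
  strictMono_of_hasDerivAt_pos auxG_deriv (fun _ => Real.exp_pos _)

lemma auxG_continuous : Continuous auxG :=
  continuous_iff_continuousAt.2 fun t => (auxG_deriv t).continuousAt

lemma auxG_nonneg {x : ℝ} (hx : 0 ≤ x) : 0 ≤ auxG x := by
  rw [← auxG_zero]; exact auxG_strictMono.monotone hx

lemma auxG_int (x y : ℝ) : ∫ s in x..y, Real.exp (-s ^ 2 / 4) = auxG y - auxG x := by
  unfold auxG
  rw [intervalIntegral.integral_interval_sub_left] <;> exact auxG_cont.intervalIntegrable _ _

/-- profile facts -/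
lemma aux_profile (H d x : ℝ) :
    HasDerivAt (fun x => H * auxG x + d * x ^ 2 / 2) (H * Real.exp (-x ^ 2 / 4) + d * x) x ∧
    HasDerivAt (fun x => H * Real.exp (-x ^ 2 / 4) + d * x)
      (-(x / 2) * (H * Real.exp (-x ^ 2 / 4)) + d) x := by
  constructor
  · have h1 := (auxG_deriv x).const_mul H
    have h2 := (((hasDerivAt_id x).pow 2).const_mul d).div_const 2
    exact (h1.add h2).congr_deriv (by norm_num; try ring)
  · have h0 : HasDerivAt (fun x : ℝ => -x ^ 2 / 4) (-(x / 2)) x := by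
      exact ((((hasDerivAt_id x).pow 2).neg).div_const 4).congr_deriv (by norm_num; try ring)
    have h1 := h0.exp.const_mul H
    have h2 := (hasDerivAt_id x).const_mul d
    exact (h1.add h2).congr_deriv (by norm_num; try ring)

lemma aux_time (a C k t : ℝ) :
    HasDerivAt (fun t => a + C * Real.exp (-k * t)) (-(k * C) * Real.exp (-k * t)) t := by
  have h0 : HasDerivAt (fun t : ℝ => -k * t) (-k) t := by
    simpa using (hasDerivAt_id t).const_mul (-k)
  exact ((h0.exp.const_mul C).const_add a).congr_deriv (by ring)

open Filter Topology in
lemma aux_time_lim (a C k : ℝ) (hk : 0 < k) :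
    Tendsto (fun t => a + C * Real.exp (-k * t)) atTop (𝓝 a) := by
  have h1 : Tendsto (fun t : ℝ => -k * t) atTop atBot :=
    tendsto_id.const_mul_atTop_of_neg (by linarith)
  have := ((Real.tendsto_exp_atBot.comp h1).const_mul C).const_add a
  simpa using this

lemma aux_kappa {C d c : ℝ} (hC : 0 < C) (hd : 0 < d) (hc : 0 < c) :
    ∃ k > 0, k * C < d ∧ k * C < c := by
  have hm : 0 < min d c := lt_min hd hc
  refine ⟨min d c / (2 * C), by positivity, ?_, ?_⟩
  all_goals
    have : min d c / (2 * C) * C = min d c / 2 := by field_simp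
    rw [this]
    have := min_le_left d c
    have := min_le_right d c
    linarith

lemma aux_exp_anti {x y : ℝ} (hx : 0 ≤ x) (hxy : x ≤ y) :
    Real.exp (-y ^ 2 / 4) ≤ Real.exp (-x ^ 2 / 4) := by
  apply Real.exp_le_exp.2
  nlinarith

lemma aux_root {h ω : ℝ} (hroot : h = ω / 2 * Real.exp (ω ^ 2 / 4)) :
    h * Real.exp (-ω ^ 2 / 4) = ω / 2 := by
  rw [hroot, mul_assoc, ← Real.exp_add]
  have : ω ^ 2 / 4 + -ω ^ 2 / 4 = 0 := by ring
  rw [this]; simp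

lemma aux_sq (x : ℝ) : x ≤ 1 + x ^ 2 := by nlinarith [sq_nonneg (x - 1)]

set_option maxHeartbeats 1000000 in
open Set Filter Topology in
lemma aux_upper {h b0 ω C0 : ℝ} {u0 : ℝ → ℝ} {W : ℝ → ℝ → ℝ} {b : ℝ → ℝ} (hh : 0 < h)
    (hb0 : 0 < b0) (hsol : IsClassicalSol21 h b0 u0 W b)
    (hω : 0 < ω) (hroot : h = ω / 2 * Real.exp (ω ^ 2 / 4))
    (hC0 : ∀ x, 0 ≤ x → x ≤ b0 → W x 0 ≤ C0) (μ : ℝ) (hμ : 0 < μ) :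
    (∃ B, 0 < B ∧ ∀ t, 0 ≤ t → b t ≤ B) ∧
    ∀ᶠ t in atTop, ∀ x, 0 ≤ x → x ≤ b t → W x t < h * (auxG ω - auxG x) + μ := by
  have hbpos := aux_bpos hh hb0 hsol
  obtain ⟨l, hl, hlω⟩ : ∃ l, h * (auxG l - auxG ω) < μ ∧ ω < l := by
    have h1 : Tendsto (fun l => h * (auxG l - auxG ω)) (𝓝[>] ω) (𝓝 (h * (auxG ω - auxG ω))) :=
      ((auxG_continuous.sub continuous_const).const_mul h |>.tendsto ω).mono_left nhdsWithin_le_nhds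
    have h2 := h1.eventually (gt_mem_nhds (show _ < μ by simpa using hμ))
    exact (h2.and self_mem_nhdsWithin).exists
  have hlpos : 0 < l := hω.trans hlω
  have hE := aux_exp_anti hω.le hlω.le
  have hR := aux_root hroot
  have hsl : 0 < l / 2 - h * Real.exp (-l ^ 2 / 4) := by nlinarith
  obtain ⟨d, hd1, hd2, hd3, hd⟩ : ∃ d : ℝ, (h + d) * auxG l + d * l ^ 2 / 2 - h * auxG ω < μ ∧
      0 < l * (1 / 2 - d) - (h + d) * Real.exp (-l ^ 2 / 4) ∧ d < 1 / 2 ∧ 0 < d := by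
    have h1 : ∀ᶠ d : ℝ in 𝓝 0, (h + d) * auxG l + d * l ^ 2 / 2 - h * auxG ω < μ := by
      have hc : Continuous fun d : ℝ => (h + d) * auxG l + d * l ^ 2 / 2 - h * auxG ω := by fun_prop
      exact (hc.tendsto 0).eventually (gt_mem_nhds (by simp; linarith))
    have h2 : ∀ᶠ d : ℝ in 𝓝 0, 0 < l * (1 / 2 - d) - (h + d) * Real.exp (-l ^ 2 / 4) := by
      have hc : Continuous fun d : ℝ => l * (1 / 2 - d) - (h + d) * Real.exp (-l ^ 2 / 4) := by
        fun_prop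
      refine (hc.tendsto 0).eventually (lt_mem_nhds ?_)
      rw [sub_zero, add_zero]; linarith
    have h3 : ∀ᶠ d : ℝ in 𝓝 0, d < 1 / 2 := gt_mem_nhds (by norm_num)
    exact ((((h1.and (h2.and h3)).filter_mono nhdsWithin_le_nhds).and
      (self_mem_nhdsWithin (s := Ioi (0:ℝ)))).exists).imp fun d hd =>
        ⟨hd.1.1, hd.1.2.1, hd.1.2.2, hd.2⟩
  set f : ℝ → ℝ := fun x => (h + d) * auxG x + d * x ^ 2 / 2 with hf
  set f1 : ℝ → ℝ := fun x => (h + d) * Real.exp (-x ^ 2 / 4) + d * x with hf1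
  have hfmono : ∀ x y, 0 ≤ x → x < y → f x < f y := by
    intro x y hx hxy
    have h1 := auxG_strictMono hxy
    have h2 : x ^ 2 ≤ y ^ 2 := by nlinarith
    simp only [hf]
    have h3 : (h + d) * auxG x < (h + d) * auxG y := mul_lt_mul_of_pos_left h1 (by linarith)
    have h4 : d * x ^ 2 ≤ d * y ^ 2 := mul_le_mul_of_nonneg_left h2 hd.le
    linarith
  have hf0 : f 0 = 0 := by simp [hf, auxG_zero]
  have hfl := hfmono 0 l le_rfl hlpos
  have hfb := hfmono 0 b0 le_rfl hb0
  rw [hf0] at hfl hfb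
  set C := |C0| + f b0 + 1 with hC
  have hCpos : 0 < C := by positivity
  set c := d * l * (l * (1 / 2 - d) - (h + d) * Real.exp (-l ^ 2 / 4)) with hc
  have hcpos : 0 < c := by positivity
  obtain ⟨k, hk, hk1, hk2⟩ := aux_kappa hCpos hd hcpos
  have hexp1 : ∀ t, 0 ≤ t → Real.exp (-k * t) ≤ 1 := by
    intro t ht
    apply Real.exp_le_one_iff.2
    nlinarith
  have key := aux_comparison hh hb0 hsol 1 (by norm_num)
    (fun t => f l + C * Real.exp (-k * t)) (fun t => -(k * C) * Real.exp (-k * t))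
    f f1 (fun x => -(x / 2) * ((h + d) * Real.exp (-x ^ 2 / 4)) + d)
    (aux_time _ _ _) (fun x => (aux_profile _ _ x).1) (fun x => (aux_profile _ _ x).2)
    (by
      intro t ht x hx hxb
      have h1 := hexp1 t ht.le
      have h2 : k * C * Real.exp (-k * t) ≤ k * C := mul_le_of_le_one_right (by positivity) h1
      have h3 : 0 < d * x ^ 2 / 2 := by positivity
      simp only [hf1]
      nlinarith)
    (by simp [hf1]; linarith)
    (by
      intro t ht hAf
      have hbt := hbpos t ht.le
      have hep : 0 < C * Real.exp (-k * t) := by positivity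
      have hlb : l ≤ b t := by
        by_contra hn
        push Not at hn
        have := hfmono (b t) l hbt.le hn
        linarith
      have hf1p : d * l ≤ f1 (b t) := by
        simp only [hf1]
        have h1 : 0 < (h + d) * Real.exp (-(b t) ^ 2 / 4) := by positivity
        have h2 : d * l ≤ d * b t := mul_le_mul_of_nonneg_left hlb hd.le
        linarith
      have hdl : 0 < d * l := by positivity
      refine ⟨by linarith, ?_⟩
      have h5 : l * (1 / 2 - d) - (h + d) * Real.exp (-l ^ 2 / 4) ≤ b t / 2 - f1 (b t) := by
        simp only [hf1]
        have h1 : (h + d) * Real.exp (-(b t) ^ 2 / 4) ≤ (h + d) * Real.exp (-l ^ 2 / 4) :=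
          mul_le_mul_of_nonneg_left (aux_exp_anti hlpos.le hlb) (by linarith)
        have h2 : l * (1 / 2 - d) ≤ b t * (1 / 2 - d) :=
          mul_le_mul_of_nonneg_right hlb (by linarith)
        linarith
      have h6 : c ≤ f1 (b t) * (b t / 2 - f1 (b t)) :=
        mul_le_mul hf1p h5 hd2.le (by linarith)
      have h2 : k * C * Real.exp (-k * t) ≤ k * C :=
        mul_le_of_le_one_right (by positivity) (hexp1 t ht.le)
      linarith)
    (by
      intro x hx hxb
      have h1 := hC0 x hx hxb
      have h2 : f x ≤ f b0 := by
        rcases hxb.eq_or_lt with h3 | h3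
        · rw [h3]
        · exact (hfmono x b0 hx h3).le
      have h4 := le_abs_self C0
      simp only [mul_zero, Real.exp_zero]
      linarith)
  constructor
  · refine ⟨1 + 2 * (f l + C) / d + b0, by positivity, ?_⟩
    intro t ht
    have hp : 0 < 2 * (f l + C) / d := by positivity
    rcases ht.eq_or_lt with h0 | h0
    · rw [← h0, hsol.2.1]
      linarith
    · have h1 := key t ht (b t) (hbpos t ht).le le_rfl
      rw [hsol.2.2.2.2.2.2.1 t h0] at h1
      have h2 : C * Real.exp (-k * t) ≤ C := mul_le_of_le_one_right hCpos.le (hexp1 t ht)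
      have h3 : 0 ≤ (h + d) * auxG (b t) := mul_nonneg (by linarith) (auxG_nonneg (hbpos t ht).le)
      have h4 : f (b t) = (h + d) * auxG (b t) + d * (b t) ^ 2 / 2 := rfl
      have h5 : (b t) ^ 2 ≤ 2 * (f l + C) / d := by
        rw [le_div_iff₀ hd]
        linarith
      have h6 := aux_sq (b t)
      linarith
  · have hlim := aux_time_lim (f l) C k hk
    have hev := hlim.eventually (gt_mem_nhds (show f l < h * auxG ω + μ by simp only [hf]; linarith))
    filter_upwards [hev, eventually_ge_atTop 0] with t ht ht0 x hx hxb
    have h1 := key t ht0 x hx hxb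
    have h3 : 0 ≤ d * auxG x := mul_nonneg hd.le (auxG_nonneg hx)
    have h4 : f x = (h + d) * auxG x + d * x ^ 2 / 2 := rfl
    have h5 : 0 ≤ d * x ^ 2 / 2 := by positivity
    linarith

set_option maxHeartbeats 1000000 in
open Set Filter Topology in
lemma aux_lower {h b0 ω B : ℝ} {u0 : ℝ → ℝ} {W : ℝ → ℝ → ℝ} {b : ℝ → ℝ} (hh : 0 < h)
    (hb0 : 0 < b0) (hsol : IsClassicalSol21 h b0 u0 W b)
    (hω : 0 < ω) (hroot : h = ω / 2 * Real.exp (ω ^ 2 / 4))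
    (hBpos : 0 < B) (hB : ∀ t, 0 ≤ t → b t ≤ B)
    (hC0 : ∀ x, 0 ≤ x → x ≤ b0 → 0 ≤ W x 0) (μ : ℝ) (hμ : 0 < μ) :
    ∀ᶠ t in atTop, ∀ x, 0 ≤ x → x ≤ b t → h * (auxG ω - auxG x) - μ < W x t := by
  have hbpos := aux_bpos hh hb0 hsol
  obtain ⟨l, hl, hlpos, hlω⟩ : ∃ l, -μ < h * (auxG l - auxG ω) ∧ 0 < l ∧ l < ω := by
    have h1 : Tendsto (fun l => h * (auxG l - auxG ω)) (𝓝[<] ω) (𝓝 (h * (auxG ω - auxG ω))) :=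
      ((auxG_continuous.sub continuous_const).const_mul h |>.tendsto ω).mono_left nhdsWithin_le_nhds
    have h2 := h1.eventually (lt_mem_nhds (show -μ < _ by simpa using hμ))
    have h3 : ∀ᶠ l in 𝓝[<] ω, 0 < l := nhdsWithin_le_nhds (lt_mem_nhds hω)
    exact (h2.and (h3.and self_mem_nhdsWithin)).exists
  have hE := aux_exp_anti hlpos.le hlω.le
  have hR := aux_root hroot
  have hsl : 0 < h * Real.exp (-l ^ 2 / 4) - l / 2 := by nlinarith
  obtain ⟨d, hd1, hd2, hd3, hd4, hd⟩ : ∃ d : ℝ,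
      -μ < (h + -d) * auxG l + -d * l ^ 2 / 2 - h * auxG ω ∧
      0 < (h + -d) * Real.exp (-l ^ 2 / 4) + -d * l - l / 2 ∧ d < h ∧
      0 < (h + -d) * Real.exp (-B ^ 2 / 4) + -d * B ∧ 0 < d := by
    have h1 : ∀ᶠ d : ℝ in 𝓝 0, -μ < (h + -d) * auxG l + -d * l ^ 2 / 2 - h * auxG ω := by
      have hc : Continuous fun d : ℝ => (h + -d) * auxG l + -d * l ^ 2 / 2 - h * auxG ω := by
        fun_prop
      exact (hc.tendsto 0).eventually (lt_mem_nhds (by simp; linarith))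
    have h2 : ∀ᶠ d : ℝ in 𝓝 0, 0 < (h + -d) * Real.exp (-l ^ 2 / 4) + -d * l - l / 2 := by
      have hc : Continuous fun d : ℝ => (h + -d) * Real.exp (-l ^ 2 / 4) + -d * l - l / 2 := by
        fun_prop
      refine (hc.tendsto 0).eventually (lt_mem_nhds ?_)
      rw [neg_zero, add_zero, zero_mul]; linarith
    have h3 : ∀ᶠ d : ℝ in 𝓝 0, d < h := gt_mem_nhds hh
    have h4 : ∀ᶠ d : ℝ in 𝓝 0, 0 < (h + -d) * Real.exp (-B ^ 2 / 4) + -d * B := by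
      have hc : Continuous fun d : ℝ => (h + -d) * Real.exp (-B ^ 2 / 4) + -d * B := by
        fun_prop
      refine (hc.tendsto 0).eventually (lt_mem_nhds ?_)
      rw [neg_zero, add_zero, zero_mul, add_zero]; positivity
    exact ((((h1.and (h2.and (h3.and h4))).filter_mono nhdsWithin_le_nhds).and
      (self_mem_nhdsWithin (s := Ioi (0:ℝ)))).exists).imp fun d hd =>
        ⟨hd.1.1, hd.1.2.1, hd.1.2.2.1, hd.1.2.2.2, hd.2⟩
  set f : ℝ → ℝ := fun x => (h + -d) * auxG x + -d * x ^ 2 / 2 with hf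
  set f1 : ℝ → ℝ := fun x => (h + -d) * Real.exp (-x ^ 2 / 4) + -d * x with hf1
  have hfd : ∀ x, HasDerivAt f (f1 x) x := fun x => (aux_profile _ _ x).1
  have hf1anti : ∀ x y, 0 ≤ x → x ≤ y → f1 y ≤ f1 x := by
    intro x y hx hxy
    simp only [hf1]
    have h1 : (h + -d) * Real.exp (-y ^ 2 / 4) ≤ (h + -d) * Real.exp (-x ^ 2 / 4) :=
      mul_le_mul_of_nonneg_left (aux_exp_anti hx hxy) (by linarith)
    have h2 : d * x ≤ d * y := mul_le_mul_of_nonneg_left hxy hd.le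
    linarith
  have hfmono : MonotoneOn f (Icc 0 B) := by
    apply monotoneOn_of_deriv_nonneg (convex_Icc 0 B)
    · exact fun x _ => (hfd x).continuousAt.continuousWithinAt
    · exact fun x _ => (hfd x).differentiableAt.differentiableWithinAt
    · intro x hx
      rw [interior_Icc] at hx
      rw [(hfd x).deriv]
      exact hd4.le.trans (hf1anti x B hx.1.le hx.2.le)
  have hf0 : f 0 = 0 := by simp [hf, auxG_zero]
  have hb0B : b0 ≤ B := by
    have := hB 0 le_rfl
    rwa [hsol.2.1] at this
  set C := |f l| + 1 with hC
  have hCpos : 0 < C := by positivity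
  have hql : f1 l = (h + -d) * Real.exp (-l ^ 2 / 4) + -d * l := rfl
  rw [← hql] at hd2
  set c := f1 l * (f1 l - l / 2) with hc
  have hcpos : 0 < c := mul_pos (by linarith) hd2
  obtain ⟨k, hk, hk1, hk2⟩ := aux_kappa hCpos hd hcpos
  have hexp1 : ∀ t, 0 ≤ t → Real.exp (-k * t) ≤ 1 := by
    intro t ht
    apply Real.exp_le_one_iff.2
    nlinarith
  have key := aux_comparison hh hb0 hsol (-1) (by norm_num)
    (fun t => f l + -C * Real.exp (-k * t)) (fun t => -(k * -C) * Real.exp (-k * t))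
    f f1 (fun x => -(x / 2) * ((h + -d) * Real.exp (-x ^ 2 / 4)) + -d)
    (aux_time _ _ _) hfd (fun x => (aux_profile _ _ x).2)
    (by
      intro t ht x hx hxb
      have h1 := hexp1 t ht.le
      have h2 : k * C * Real.exp (-k * t) ≤ k * C := mul_le_of_le_one_right (by positivity) h1
      have h3 : 0 < d * x ^ 2 / 2 := by positivity
      simp only [hf1]
      nlinarith)
    (by simp [hf1]; linarith)
    (by
      intro t ht hAf
      have hbt := hbpos t ht.le
      have hep : 0 < C * Real.exp (-k * t) := by positivity
      have hlb : b t ≤ l := by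
        by_contra hn
        push Not at hn
        have hBt := hB t ht.le
        have := hfmono ⟨hlpos.le, by linarith⟩ ⟨hbt.le, hBt⟩ hn.le
        linarith
      have hf1p := hf1anti (b t) l hbt.le hlb
      refine ⟨by linarith, ?_⟩
      have h6 : c ≤ f1 (b t) * (f1 (b t) - b t / 2) :=
        mul_le_mul hf1p (by linarith) hd2.le (by linarith)
      have h2 : k * C * Real.exp (-k * t) ≤ k * C :=
        mul_le_of_le_one_right (by positivity) (hexp1 t ht.le)
      linarith)
    (by
      intro x hx hxb
      have h1 := hC0 x hx hxb
      have h2 := hfmono ⟨le_rfl, hBpos.le⟩ ⟨hx, hxb.trans hb0B⟩ hx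
      have h4 := le_abs_self (f l)
      simp only [mul_zero, Real.exp_zero]
      linarith)
  have hlim := aux_time_lim (f l) (-C) k hk
  have hev := hlim.eventually (lt_mem_nhds (show h * auxG ω - μ < f l by simp only [hf]; linarith))
  filter_upwards [hev, eventually_ge_atTop 0] with t ht ht0 x hx hxb
  have h1 := key t ht0 x hx hxb
  have h3 : 0 ≤ d * auxG x := mul_nonneg hd.le (auxG_nonneg hx)
  have h4 : f x = (h + -d) * auxG x + -d * x ^ 2 / 2 := rfl
  have h5 : 0 ≤ d * x ^ 2 / 2 := by positivity
  linarith

/-- Theorem 3.3: let `(W, b)` be the classical solution of (2.1) with data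
`(h, u0, b0)`, where `u0 ∈ W^{1,∞}(0,∞)`, `u0 ≥ 0`, `u0 0 > 0`, `u0 = 0` on
`[b0, ∞)`, and let `(W^∞, b^∞) = (W^∞, ω)` be the unique steady state of (2.1).
Then (a) `b τ → b^∞`; (b) `W(·, τ) → W^∞` uniformly on `[0, β]` for every
`β ∈ (0, b^∞)`; (c) the zero-extension of `W(·, τ)` converges uniformly on
compact subsets of `[0, ∞)` to the zero-extension of `W^∞`. -/
theorem convergence_to_steady_state
    (h b0 ω : ℝ) (hh : 0 < h) (hb0 : 0 < b0)
    (u0 : ℝ → ℝ)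
    (hlip : ∃ M : NNReal, LipschitzOnWith M u0 (Set.Ici 0))
    (hbdd : ∃ C : ℝ, ∀ x ∈ Set.Ici (0:ℝ), |u0 x| ≤ C)
    (hpos : ∀ x ∈ Set.Ici (0:ℝ), 0 ≤ u0 x)
    (hu00 : 0 < u0 0)
    (hzero : ∀ x ∈ Set.Ici b0, u0 x = 0)
    (W : ℝ → ℝ → ℝ) (b : ℝ → ℝ)
    (hsol : IsClassicalSol21 h b0 u0 W b)
    (hω : 0 < ω) (hroot : h = ω / 2 * Real.exp (ω ^ 2 / 4))
    (Winf : ℝ → ℝ)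
    (hWinf : ∀ η, Winf η = h * ∫ s in η..ω, Real.exp (-s ^ 2 / 4)) :
    Filter.Tendsto b Filter.atTop (nhds ω) ∧
    (∀ β, 0 < β → β < ω →
      TendstoUniformlyOn (fun τ η => W η τ) Winf Filter.atTop (Set.Icc 0 β)) ∧
    (∀ K : Set ℝ, IsCompact K → K ⊆ Set.Ici 0 →
      TendstoUniformlyOn (fun τ η => if η ≤ b τ then W η τ else 0)
        (fun η => if η ≤ ω then Winf η else 0) Filter.atTop K) := by
  have hbpos := aux_bpos hh hb0 hsol
  obtain ⟨C0, hC0⟩ := hbdd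
  have hinit : ∀ x, 0 ≤ x → x ≤ b0 → W x 0 ∈ Set.Icc 0 C0 := by
    have hc : ContinuousOn (fun y => W y 0) (closure (Set.Ioo 0 b0)) := by
      rw [closure_Ioo hb0.ne]
      exact hsol.2.2.1.comp (f := fun y : ℝ => (y, (0:ℝ))) (by fun_prop)
        (fun z hz => ⟨le_rfl, hz.1, by simp only [hsol.2.1]; exact hz.2⟩)
    have hm : Set.MapsTo (fun y => W y 0) (Set.Ioo 0 b0) (Set.Icc 0 C0) := by
      intro y hy
      simp only [hsol.2.2.2.2.2.2.2.2 y hy.1 hy.2]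
      exact ⟨hpos y hy.1.le, (le_abs_self _).trans (hC0 y hy.1.le)⟩
    have h1 := hm.closure_of_continuousOn hc
    rw [closure_Ioo hb0.ne, isClosed_Icc.closure_eq] at h1
    exact fun x hx hxb => h1 ⟨hx, hxb⟩
  have hup := aux_upper hh hb0 hsol hω hroot (fun x hx hxb => (hinit x hx hxb).2)
  obtain ⟨B, hBpos, hB⟩ := (hup 1 one_pos).1
  have hlo := aux_lower hh hb0 hsol hω hroot hBpos hB (fun x hx hxb => (hinit x hx hxb).1)
  have hWG : ∀ x, Winf x = h * (auxG ω - auxG x) := by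
    intro x
    rw [hWinf, auxG_int]
  have hanti : ∀ x y, x < y → Winf y < Winf x := by
    intro x y hxy
    rw [hWG, hWG]
    have := auxG_strictMono hxy
    nlinarith
  have hωz : Winf ω = 0 := by rw [hWG]; simp
  have main : ∀ μ > 0, ∀ᶠ t in Filter.atTop, 0 < t ∧ ∀ x, 0 ≤ x → x ≤ b t →
      |W x t - Winf x| < μ := by
    intro μ hμ
    filter_upwards [(hup μ hμ).2, hlo μ hμ, Filter.eventually_gt_atTop 0] with t h1 h2 h3
    refine ⟨h3, fun x hx hxb => ?_⟩
    rw [hWG, abs_lt]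
    constructor <;> linarith [h1 x hx hxb, h2 x hx hxb]
  have mainb : ∀ μ > 0, ∀ᶠ t in Filter.atTop, |Winf (b t)| < μ := by
    intro μ hμ
    filter_upwards [main μ hμ] with t ht
    have := ht.2 (b t) (hbpos t ht.1.le).le le_rfl
    rw [hsol.2.2.2.2.2.2.1 t ht.1] at this
    simpa using this
  have hA : Filter.Tendsto b Filter.atTop (nhds ω) := by
    rw [tendsto_order]
    constructor
    · intro a ha
      have h1 := hanti a ω ha
      rw [hωz] at h1
      filter_upwards [mainb _ h1] with t ht
      by_contra hn
      push Not at hn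
      have h2 : Winf a ≤ Winf (b t) := by
        rcases hn.eq_or_lt with h3 | h3
        · rw [h3]
        · exact (hanti _ _ h3).le
      have := le_abs_self (Winf (b t))
      linarith
    · intro a ha
      have h1 := hanti ω a ha
      rw [hωz] at h1
      filter_upwards [mainb (-Winf a) (by linarith)] with t ht
      by_contra hn
      push Not at hn
      have h2 : Winf (b t) ≤ Winf a := by
        rcases hn.eq_or_lt with h3 | h3
        · rw [h3]
        · exact (hanti _ _ h3).le
      have := neg_abs_le (Winf (b t))
      linarith
  refine ⟨hA, ?_, ?_⟩
  · intro β hβ hβω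
    rw [Metric.tendstoUniformlyOn_iff]
    intro μ hμ
    filter_upwards [main μ hμ, hA.eventually (lt_mem_nhds hβω)] with t ht hbt x hx
    rw [dist_comm, Real.dist_eq]
    exact ht.2 x hx.1 (hx.2.trans hbt.le)
  · intro K _ hK
    rw [Metric.tendstoUniformlyOn_iff]
    intro μ hμ
    filter_upwards [main (μ / 2) (by linarith), mainb (μ / 2) (by linarith)] with t ht hbt x hx
    have hx0 : 0 ≤ x := hK hx
    rw [dist_comm, Real.dist_eq]
    have hmono : ∀ y z, y ≤ z → Winf z ≤ Winf y := by
      intro y z hyz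
      rcases hyz.eq_or_lt with h3 | h3
      · rw [h3]
      · exact (hanti _ _ h3).le
    rw [abs_lt] at hbt
    by_cases h1 : x ≤ b t
    · have h3 := ht.2 x hx0 h1
      rw [abs_lt] at h3
      by_cases h2 : x ≤ ω
      · rw [if_pos h1, if_pos h2, abs_lt]
        constructor <;> linarith
      · rw [if_pos h1, if_neg h2, abs_lt]
        have h4 := hmono _ _ h1
        have h5 := hmono _ _ (not_le.1 h2).le
        rw [hωz] at h5
        constructor <;> linarith
    · by_cases h2 : x ≤ ω
      · rw [if_neg h1, if_pos h2, abs_lt]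
        have h4 := hmono _ _ (not_le.1 h1).le
        have h5 := hmono _ _ h2
        rw [hωz] at h5
        constructor <;> linarith
      · rw [if_neg h1, if_neg h2]
        simpa using hμ
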